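/- (Lemma: accuracy of V_{(1)}.) In the SARRS setting, suppose ‖U_{(1)}U_{(1)}' − UU'‖_F < c_1' for a sufficiently small positive constant c_1', where U ∈ O(n,r) is the left singular vector matrix of XA, A ∈ Θ(s,r,d,γ), and U_{(1)} ∈ O(n,r) is independent of Y_{(2)} = XA + Z_{(2)} with Z_{(2)} having i.i.d. N(0,4σ²) entries. Let V ∈ O(m,r) be the right singular vector matrix of XA and V_{(1)} ∈ O(m,r) the matrix of top-r right singular vectors of U_{(1)}U_{(1)}'Y_{(2)}. Assume κ_-(s_*) d ≤ σ_r(XA) and σ_1(XA) ≤ κ_+(s_*) γ d with K^{-1} ≤ κ_-(s_*) ≤ κ_+(s_*) ≤ K for an absolute constant K > 1. Then there exists a constant C depending only on κ_±(s_*), γ and c_1' such that, with probability at least 1 − 1/p, ‖V_{(1)}V_{(1)}' − VV'‖_F ≤ C σ (√(mr) + √(2 log p)) / d. -/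

import Mathlib

open MeasureTheory ProbabilityTheory Matrix Set
open scoped ENNReal NNReal

noncomputable section

/-- Euclidean (ℓ₂) norm of a finitely indexed real vector. -/
def l2norm {I : Type*} [Fintype I] (v : I → ℝ) : ℝ := Real.sqrt (∑ i, v i ^ 2)

/-- Frobenius norm of a real matrix. -/
def frobNorm {I J : Type*} [Fintype I] [Fintype J] (M : Matrix I J ℝ) : ℝ :=
  Real.sqrt (∑ i, ∑ j, M i j ^ 2)

/-- ℓ₂/ℓ₁ norm: the sum of the ℓ₂ norms of the rows. -/
def norm21 {I J : Type*} [Fintype I] [Fintype J] (M : Matrix I J ℝ) : ℝ :=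
  ∑ i, l2norm (M i)

open Classical in
/-- Row support: indices of nonzero rows. -/
def rowSupport {I J : Type*} [Fintype I] [Fintype J] (M : Matrix I J ℝ) : Finset I :=
  Finset.univ.filter (fun i => M i ≠ 0)

/-- The j-th largest singular value (j ≥ 1), via the Courant–Fischer max–min
characterization: `σ_j(M) = max_{dim V = j} min_{v ∈ V, ‖v‖=1} ‖Mv‖`. -/
def singularValue {I J : Type*} [Fintype I] [Fintype J] (M : Matrix I J ℝ) (j : ℕ) : ℝ :=
  sSup { t | ∃ V : Submodule ℝ (J → ℝ), Module.finrank ℝ V = j ∧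
    t = sInf { u | ∃ v ∈ V, l2norm v = 1 ∧ u = l2norm (M.mulVec v) } }

/-- Operator norm (largest singular value). -/
def opNorm {I J : Type*} [Fintype I] [Fintype J] (M : Matrix I J ℝ) : ℝ :=
  sSup { t | ∃ v : J → ℝ, l2norm v = 1 ∧ t = l2norm (M.mulVec v) }

/-- Schatten-q norm. -/
def schattenNorm {I J : Type*} [Fintype I] [Fintype J] (M : Matrix I J ℝ) (q : ℝ) : ℝ :=
  (∑ i ∈ Finset.Icc 1 (min (Fintype.card I) (Fintype.card J)), singularValue M i ^ q) ^ (1 / q)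

/-- Squared lower k-sparse Riesz constant `κ₋²(k)`:
the minimum over column subsets B with |B| = k of the smallest eigenvalue of X_B' X_B. -/
def kappaMinusSq {n p : ℕ} (X : Matrix (Fin n) (Fin p) ℝ) (k : ℕ) : ℝ :=
  sInf { t | ∃ B : Finset (Fin p), B.card = k ∧ ∃ v : Fin p → ℝ,
    (∀ i, i ∉ B → v i = 0) ∧ l2norm v = 1 ∧ t = l2norm (X.mulVec v) ^ 2 }

/-- Squared upper k-sparse Riesz constant `κ₊²(k)`. -/
def kappaPlusSq {n p : ℕ} (X : Matrix (Fin n) (Fin p) ℝ) (k : ℕ) : ℝ :=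
  sSup { t | ∃ B : Finset (Fin p), B.card = k ∧ ∃ v : Fin p → ℝ,
    (∀ i, i ∉ B → v i = 0) ∧ l2norm v = 1 ∧ t = l2norm (X.mulVec v) ^ 2 }

def kappaMinus {n p : ℕ} (X : Matrix (Fin n) (Fin p) ℝ) (k : ℕ) : ℝ :=
  Real.sqrt (kappaMinusSq X k)

def kappaPlus {n p : ℕ} (X : Matrix (Fin n) (Fin p) ℝ) (k : ℕ) : ℝ :=
  Real.sqrt (kappaPlusSq X k)

/-- Membership in the parameter space Θ(s, r, d, γ): rank r, all nonzero singular values in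
(d, γd], and at most s nonzero rows. (Singular values are automatically nonincreasing.) -/
def memTheta {p m : ℕ} (A : Matrix (Fin p) (Fin m) ℝ) (s r : ℕ) (d γ : ℝ) : Prop :=
  A.rank = r ∧ 0 < d ∧ singularValue A 1 ≤ γ * d ∧ d < singularValue A r ∧
    (rowSupport A).card ≤ s

/-- `V` is a matrix of top-r right singular vectors of `M`: the columns of `V` are orthonormal
eigenvectors of `MᵀM`, the j-th column with eigenvalue `σ_j(M)²`. -/
def IsRightSingularVectors {I J : Type*} [Fintype I] [Fintype J] {r : ℕ}
    (M : Matrix I J ℝ) (V : Matrix J (Fin r) ℝ) : Prop :=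
  Vᵀ * V = 1 ∧ ∀ j : Fin r,
    (Mᵀ * M).mulVec (fun i => V i j) = (singularValue M (j.1 + 1)) ^ 2 • (fun i => V i j)

/-- `U` is a matrix of top-r left singular vectors of `M`. -/
def IsLeftSingularVectors {I J : Type*} [Fintype I] [Fintype J] {r : ℕ}
    (M : Matrix I J ℝ) (U : Matrix I (Fin r) ℝ) : Prop :=
  IsRightSingularVectors Mᵀ U

instance matrixMeasurableSpace {n m : ℕ} : MeasurableSpace (Matrix (Fin n) (Fin m) ℝ) :=
  (inferInstance : MeasurableSpace (Fin n → Fin m → ℝ))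

/-- Law of an n×m random matrix with i.i.d. N(0, v) entries. -/
def gaussianMatrix (n m : ℕ) (v : ℝ≥0) : Measure (Matrix (Fin n) (Fin m) ℝ) :=
  Measure.pi fun _ : Fin n => Measure.pi fun _ : Fin m => gaussianReal 0 v

open Classical in
/-- Kullback–Leibler divergence D(P‖Q). -/
def klDivM {Ω : Type*} [MeasurableSpace Ω] (P Q : Measure Ω) : ℝ≥0∞ :=
  if P ≪ Q ∧ Integrable (fun x => Real.log (P.rnDeriv Q x).toReal) P
  then ENNReal.ofReal (∫ x, Real.log (P.rnDeriv Q x).toReal ∂P)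
  else ∞

/-- ε-packing number of T with respect to the distance ρ: the maximal cardinality of a subset
of T whose pairwise ρ-distances are all at least ε. -/
def packingNumber {α : Type*} (T : Set α) (ρ : α → α → ℝ) (ε : ℝ) : ℕ :=
  sSup { k | ∃ S : Finset α, ↑S ⊆ T ∧ (∀ x ∈ S, ∀ y ∈ S, x ≠ y → ε ≤ ρ x y) ∧ S.card = k }

/-- Moore–Penrose pseudoinverse (characterized by the four Penrose equations). -/
def IsMoorePenrose {k : ℕ} (M Mi : Matrix (Fin k) (Fin k) ℝ) : Prop :=
  M * Mi * M = M ∧ Mi * M * Mi = Mi ∧ (M * Mi)ᵀ = M * Mi ∧ (Mi * M)ᵀ = Mi * M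

/-!
Write `P = U₁U₁ᵀ`, `M = XA` and let `Q = 1 - V₁V₁ᵀ` be the projection off the right singular vectors
of `P(M + Z)`. The rank of `P(M + Z)` is at most `r`, so `Q` kills it and
`‖PMQ‖ = ‖PZQ‖ ≤ ‖U₁ᵀZ‖`. Since `UUᵀM = M`, a projection `P` within distance `c < 1` of `UUᵀ` loses
little of `MQ`, namely `(1 - c)‖MQ‖ ≤ ‖PMQ‖`; moreover `σ_r(M)‖VᵀQ‖ ≤ ‖MQ‖` and
`‖V₁V₁ᵀ - VVᵀ‖ = √2 ‖VᵀQ‖`. Together these bound the error by `√2 ‖U₁ᵀZ‖ / ((1 - c) σ_r(M))`, for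
every realisation of the noise.

By rotation invariance `U₁ᵀZ` is an `r × m` matrix of i.i.d. Gaussian entries, so the Chernoff bound
for its squared Frobenius norm, a multiple of a chi-square variable with `rm` degrees of freedom,
finishes the proof.
-/

section Frobenius

variable {I J K : Type*} [Fintype I] [Fintype J] [Fintype K]

lemma frobNorm_nonneg (M : Matrix I J ℝ) : 0 ≤ frobNorm M :=
  Real.sqrt_nonneg _

lemma frobNorm_sq (M : Matrix I J ℝ) : frobNorm M ^ 2 = ∑ i, ∑ j, M i j ^ 2 :=
  Real.sq_sqrt (by positivity)

lemma trace_transpose_mul_eq_sum (M N : Matrix I J ℝ) :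
    (Mᵀ * N).trace = ∑ i, ∑ j, M i j * N i j := by
  rw [Finset.sum_comm]
  simp only [trace, diag, mul_apply, transpose_apply]

lemma frobNorm_sq_eq_trace (M : Matrix I J ℝ) : frobNorm M ^ 2 = (Mᵀ * M).trace := by
  rw [frobNorm_sq, trace_transpose_mul_eq_sum]
  simp only [sq]

open scoped Matrix.Norms.Frobenius in
lemma frobNorm_eq_norm (M : Matrix I J ℝ) : frobNorm M = ‖M‖ := by
  simp [frobNorm, frobenius_norm_def, Real.sqrt_eq_rpow]

lemma frobNorm_neg (M : Matrix I J ℝ) : frobNorm (-M) = frobNorm M := by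
  simp only [frobNorm, Matrix.neg_apply, neg_sq]

lemma frobNorm_transpose (M : Matrix I J ℝ) : frobNorm Mᵀ = frobNorm M := by
  simp only [frobNorm_eq_norm, frobenius_norm_transpose]

lemma frobNorm_mul_le (M : Matrix I J ℝ) (N : Matrix J K ℝ) :
    frobNorm (M * N) ≤ frobNorm M * frobNorm N := by
  simpa only [frobNorm_eq_norm] using frobenius_norm_mul M N

open scoped Matrix.Norms.Frobenius in
lemma frobNorm_sub_le (M N : Matrix I J ℝ) : frobNorm (M - N) ≤ frobNorm M + frobNorm N := by
  simpa only [frobNorm_eq_norm] using norm_sub_le M N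

lemma frobNorm_mul_of_transpose_mul_self [DecidableEq J] {U : Matrix I J ℝ} (hU : Uᵀ * U = 1)
    (W : Matrix J K ℝ) : frobNorm (U * W) = frobNorm W := by
  refine (sq_eq_sq₀ (frobNorm_nonneg _) (frobNorm_nonneg _)).1 ?_
  rw [frobNorm_sq_eq_trace, frobNorm_sq_eq_trace, transpose_mul, Matrix.mul_assoc,
    ← Matrix.mul_assoc Uᵀ, hU, Matrix.one_mul]

lemma frobNorm_sq_of_transpose_mul_self [DecidableEq J] {V : Matrix I J ℝ} (hV : Vᵀ * V = 1) :
    frobNorm V ^ 2 = Fintype.card J := by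
  rw [frobNorm_sq_eq_trace, hV, trace_one]

lemma frobNorm_mul_one_sub_sq [DecidableEq I] [DecidableEq J] {V : Matrix I J ℝ}
    (hV : Vᵀ * V = 1) (W : Matrix K I ℝ) :
    frobNorm (W * (1 - V * Vᵀ)) ^ 2 = frobNorm W ^ 2 - frobNorm (W * V) ^ 2 := by
  have hidem : V * Vᵀ * (V * Vᵀ) = V * Vᵀ := by
    rw [Matrix.mul_assoc, ← Matrix.mul_assoc Vᵀ, hV, Matrix.one_mul]
  have hmul : W * (1 - V * Vᵀ) * (W * (1 - V * Vᵀ))ᵀ = W * Wᵀ - W * V * (W * V)ᵀ := by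
    have : (1 - V * Vᵀ) * (1 - V * Vᵀ) = 1 - V * Vᵀ := by
      rw [mul_sub, mul_one, sub_mul, one_mul, hidem, sub_self, sub_zero]
    simp only [transpose_mul, transpose_sub, transpose_one, transpose_transpose]
    rw [Matrix.mul_assoc, ← Matrix.mul_assoc _ _ Wᵀ, this]
    simp only [Matrix.mul_sub, Matrix.sub_mul, Matrix.one_mul, Matrix.mul_assoc]
  have htrace (N : Matrix K I ℝ) : frobNorm N ^ 2 = (N * Nᵀ).trace := by
    rw [frobNorm_sq_eq_trace, trace_mul_comm]
  rw [htrace, hmul, trace_sub, ← htrace, trace_mul_comm, ← frobNorm_sq_eq_trace]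

lemma frobNorm_mul_one_sub_le [DecidableEq I] [DecidableEq J] {V : Matrix I J ℝ}
    (hV : Vᵀ * V = 1) (W : Matrix K I ℝ) : frobNorm (W * (1 - V * Vᵀ)) ≤ frobNorm W := by
  refine (sq_le_sq₀ (frobNorm_nonneg _) (frobNorm_nonneg _)).1 ?_
  rw [frobNorm_mul_one_sub_sq hV]
  exact sub_le_self _ (sq_nonneg _)

lemma frobNorm_projection_sub_sq [DecidableEq I] [DecidableEq J] {V W : Matrix I J ℝ}
    (hV : Vᵀ * V = 1) (hW : Wᵀ * W = 1) :
    frobNorm (W * Wᵀ - V * Vᵀ) ^ 2 = 2 * frobNorm (Vᵀ * (1 - W * Wᵀ)) ^ 2 := by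
  have hmul : (W * Wᵀ - V * Vᵀ)ᵀ * (W * Wᵀ - V * Vᵀ)
      = W * (Wᵀ * W) * Wᵀ + V * (Vᵀ * V) * Vᵀ - W * (Vᵀ * W)ᵀ * Vᵀ - V * (Vᵀ * W) * Wᵀ := by
    simp only [transpose_sub, transpose_mul, transpose_transpose, Matrix.sub_mul, Matrix.mul_sub,
      Matrix.mul_assoc]
    abel
  have hcross : (W * (Vᵀ * W)ᵀ * Vᵀ).trace = frobNorm (Vᵀ * W) ^ 2 := by
    rw [trace_mul_comm, ← Matrix.mul_assoc, trace_mul_comm, frobNorm_sq_eq_trace]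
  have hcross' : (V * (Vᵀ * W) * Wᵀ).trace = frobNorm (Vᵀ * W) ^ 2 := by
    rw [← hcross, ← trace_transpose]
    simp only [transpose_mul, transpose_transpose, Matrix.mul_assoc]
  rw [frobNorm_sq_eq_trace, hmul, trace_sub, trace_sub, trace_add, hcross, hcross', hV, hW,
    Matrix.mul_one, Matrix.mul_one, trace_mul_comm W, trace_mul_comm V, hV, hW, trace_one,
    frobNorm_mul_one_sub_sq hW, frobNorm_transpose, frobNorm_sq_of_transpose_mul_self hV]
  ring

lemma one_sub_mul_frobNorm_le {P P₀ : Matrix I I ℝ} {B : Matrix I K ℝ} (hB : P₀ * B = B) :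
    (1 - frobNorm (P - P₀)) * frobNorm B ≤ frobNorm (P * B) := by
  have hsplit : B = P * B - (P - P₀) * B := by rw [Matrix.sub_mul, hB, sub_sub_cancel]
  have hle : frobNorm B ≤ frobNorm (P * B) + frobNorm (P - P₀) * frobNorm B := by
    conv_lhs => rw [hsplit]
    exact (frobNorm_sub_le _ _).trans (by gcongr; exact frobNorm_mul_le _ _)
  linarith

end Frobenius

lemma exists_submodule_le_finrank_eq {K E : Type*} [DivisionRing K] [AddCommGroup E] [Module K E]
    (W : Submodule K E) {j : ℕ} (hj : j ≤ Module.finrank K W) :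
    ∃ W' ≤ W, Module.finrank K W' = j := by
  obtain ⟨f, hf⟩ := exists_linearIndependent_of_le_finrank hj
  refine ⟨Submodule.span K (Set.range (W.subtype ∘ f)), ?_, ?_⟩
  · rw [Submodule.span_le]
    rintro _ ⟨i, rfl⟩
    exact (f i).2
  · rw [finrank_span_eq_card (hf.map' W.subtype W.ker_subtype), Fintype.card_fin]

section Norms

variable {I J : Type*} [Fintype I] [Fintype J]

lemma l2norm_eq_norm (x : J → ℝ) : l2norm x = ‖WithLp.toLp 2 x‖ := by
  simp [l2norm, EuclideanSpace.norm_eq]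

lemma l2norm_nonneg (x : J → ℝ) : 0 ≤ l2norm x :=
  Real.sqrt_nonneg _

lemma l2norm_pos {x : J → ℝ} (hx : x ≠ 0) : 0 < l2norm x := by
  rw [l2norm_eq_norm, norm_pos_iff]
  simpa using hx

lemma l2norm_smul (c : ℝ) (x : J → ℝ) : l2norm (c • x) = |c| * l2norm x := by
  rw [l2norm_eq_norm, l2norm_eq_norm, WithLp.toLp_smul, norm_smul, Real.norm_eq_abs]

lemma l2norm_mulVec_le (M : Matrix I J ℝ) (x : J → ℝ) :
    l2norm (M.mulVec x) ≤ frobNorm M * l2norm x := by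
  unfold l2norm frobNorm
  rw [← Real.sqrt_mul (by positivity), Finset.sum_mul]
  refine Real.sqrt_le_sqrt (Finset.sum_le_sum fun i _ => ?_)
  exact Finset.sum_mul_sq_le_sq_mul_sq _ _ _

end Norms

section SingularValues

variable {I J : Type*} [Fintype I] [Fintype J]

/-- The minimum modulus of `M` on `W`: the least length of `M x` over unit vectors `x ∈ W`. The
singular value `σ_j(M)` is its supremum over the `j`-dimensional subspaces `W`. For `W = ⊥` there
are no unit vectors and the value is `sInf ∅ = 0`. -/
def minModulusOn (M : Matrix I J ℝ) (W : Submodule ℝ (J → ℝ)) : ℝ :=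
  sInf {u | ∃ x ∈ W, l2norm x = 1 ∧ u = l2norm (M.mulVec x)}

lemma minModulusOn_nonneg (M : Matrix I J ℝ) (W : Submodule ℝ (J → ℝ)) : 0 ≤ minModulusOn M W :=
  Real.sInf_nonneg fun _ ⟨_, _, _, hu⟩ => hu ▸ l2norm_nonneg _

lemma exists_mem_l2norm_eq_one {W : Submodule ℝ (J → ℝ)} (hW : W ≠ ⊥) :
    ∃ x ∈ W, l2norm x = 1 := by
  obtain ⟨x, hxW, hx⟩ := W.exists_mem_ne_zero_of_ne_bot hW
  have hpos := l2norm_pos hx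
  refine ⟨(l2norm x)⁻¹ • x, W.smul_mem _ hxW, ?_⟩
  rw [l2norm_smul, abs_inv, abs_of_pos hpos, inv_mul_cancel₀ hpos.ne']

lemma minModulusOn_le (M : Matrix I J ℝ) {W : Submodule ℝ (J → ℝ)} {x : J → ℝ} (hxW : x ∈ W)
    (hx : l2norm x = 1) : minModulusOn M W ≤ l2norm (M.mulVec x) :=
  csInf_le ⟨0, fun _ ⟨_, _, _, hu⟩ => hu ▸ l2norm_nonneg _⟩ ⟨x, hxW, hx, rfl⟩

lemma le_minModulusOn (M : Matrix I J ℝ) {W : Submodule ℝ (J → ℝ)} (hW : W ≠ ⊥) {c : ℝ}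
    (h : ∀ x ∈ W, l2norm x = 1 → c ≤ l2norm (M.mulVec x)) : c ≤ minModulusOn M W := by
  obtain ⟨x, hxW, hx⟩ := exists_mem_l2norm_eq_one hW
  refine le_csInf ⟨_, x, hxW, hx, rfl⟩ ?_
  rintro _ ⟨y, hyW, hy, rfl⟩
  exact h y hyW hy

lemma minModulusOn_le_frobNorm (M : Matrix I J ℝ) (W : Submodule ℝ (J → ℝ)) :
    minModulusOn M W ≤ frobNorm M := by
  by_cases hW : ∃ x ∈ W, l2norm x = 1
  · obtain ⟨x, hxW, hx⟩ := hW
    simpa only [hx, mul_one] using (minModulusOn_le M hxW hx).trans (l2norm_mulVec_le M x)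
  · have hempty : {u | ∃ x ∈ W, l2norm x = 1 ∧ u = l2norm (M.mulVec x)} = ∅ := by
      refine eq_empty_of_forall_notMem ?_
      rintro _ ⟨x, hxW, hx, -⟩
      exact hW ⟨x, hxW, hx⟩
    rw [minModulusOn, hempty, Real.sInf_empty]
    exact frobNorm_nonneg M

lemma minModulusOn_anti (M : Matrix I J ℝ) {W' W : Submodule ℝ (J → ℝ)} (hW' : W' ≠ ⊥)
    (h : W' ≤ W) : minModulusOn M W ≤ minModulusOn M W' :=
  le_minModulusOn M hW' fun _ hxW hx => minModulusOn_le M (h hxW) hx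

lemma minModulusOn_pos (M : Matrix I J ℝ) {W : Submodule ℝ (J → ℝ)} (hW : W ≠ ⊥)
    (hker : Disjoint (LinearMap.ker M.mulVecLin) W) : 0 < minModulusOn M W := by
  classical
  let W₂ : Submodule ℝ (EuclideanSpace ℝ J) := W.comap (WithLp.linearEquiv 2 ℝ (J → ℝ)).toLinearMap
  let f := (toEuclideanLin M).domRestrict W₂
  have hf : LinearMap.ker f = ⊥ := by
    refine LinearMap.ker_eq_bot'.2 fun x hx => ?_
    have hMx : M.mulVec (x : EuclideanSpace ℝ J).ofLp = 0 := by
      simpa [f, toLpLin_apply] using hx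
    simpa using Submodule.disjoint_def.1 hker _ hMx x.2
  obtain ⟨κ, hκ, hanti⟩ := f.exists_antilipschitzWith hf
  have hκ' : (0 : ℝ) < κ := hκ
  refine (inv_pos.2 hκ').trans_le (le_minModulusOn M hW fun x hxW hx => ?_)
  have hle : l2norm x ≤ κ * l2norm (M.mulVec x) := by
    rw [l2norm_eq_norm, l2norm_eq_norm]
    exact hanti.le_mul_norm (map_zero f) (⟨WithLp.toLp 2 x, hxW⟩ : W₂)
  rwa [hx, ← inv_le_iff_one_le_mul₀' hκ'] at hle

lemma minModulusOn_le_singularValue (M : Matrix I J ℝ) (W : Submodule ℝ (J → ℝ)) :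
    minModulusOn M W ≤ singularValue M (Module.finrank ℝ W) :=
  le_csSup ⟨frobNorm M, fun _ ⟨_, _, ht⟩ => ht ▸ minModulusOn_le_frobNorm M _⟩ ⟨W, rfl, rfl⟩

lemma singularValue_nonneg (M : Matrix I J ℝ) (j : ℕ) : 0 ≤ singularValue M j :=
  Real.sSup_nonneg fun _ ⟨W, _, ht⟩ => ht ▸ minModulusOn_nonneg M W

lemma singularValue_anti (M : Matrix I J ℝ) {j k : ℕ} (hj : j ≠ 0) (hjk : j ≤ k) :
    singularValue M k ≤ singularValue M j := by
  refine Real.sSup_le ?_ (singularValue_nonneg M j)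
  rintro _ ⟨W, rfl, rfl⟩
  obtain ⟨W', hW'W, rfl⟩ := exists_submodule_le_finrank_eq W hjk
  have hW' : W' ≠ ⊥ := fun h => hj (Submodule.finrank_eq_zero.2 h)
  exact (minModulusOn_anti M hW' hW'W).trans (minModulusOn_le_singularValue M W')

lemma singularValue_pos (M : Matrix I J ℝ) {j : ℕ} (hj : j ≠ 0) (hjr : j ≤ M.rank) :
    0 < singularValue M j := by
  obtain ⟨W, hW⟩ := Submodule.exists_isCompl (LinearMap.ker M.mulVecLin)
  have hrank : M.rank = Module.finrank ℝ W := by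
    have hker := Submodule.finrank_add_eq_of_isCompl hW
    have hrange := LinearMap.finrank_range_add_finrank_ker M.mulVecLin
    rw [rank]
    omega
  obtain ⟨W', hW'W, rfl⟩ := exists_submodule_le_finrank_eq W (hjr.trans_eq hrank)
  have hW' : W' ≠ ⊥ := fun h => hj (Submodule.finrank_eq_zero.2 h)
  exact (minModulusOn_pos M hW' (hW.disjoint.mono_right hW'W)).trans_le
    (minModulusOn_le_singularValue M W')

end SingularValues

namespace IsRightSingularVectors

variable {I J : Type*} [Fintype I] [Fintype J] {r : ℕ} {M : Matrix I J ℝ} {V : Matrix J (Fin r) ℝ}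

lemma transpose_mul_mul (hV : IsRightSingularVectors M V) :
    Mᵀ * M * V = V * diagonal fun j : Fin r => singularValue M (j + 1) ^ 2 := by
  ext i j
  rw [mul_diagonal, mul_comm]
  exact congrFun (hV.2 j) i

lemma singularValue_mul_frobNorm_le (hV : IsRightSingularVectors M V) {K : Type*} [Fintype K]
    (B : Matrix (Fin r) K ℝ) : singularValue M r * frobNorm B ≤ frobNorm (M * V * B) := by
  have hgram : (M * V * B)ᵀ * (M * V * B)
      = Bᵀ * ((diagonal fun j : Fin r => singularValue M (j + 1) ^ 2) * B) := by
    calc (M * V * B)ᵀ * (M * V * B) = Bᵀ * (Vᵀ * (Mᵀ * M * V) * B) := by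
          simp only [transpose_mul, Matrix.mul_assoc]
      _ = _ := by rw [hV.transpose_mul_mul, ← Matrix.mul_assoc Vᵀ, hV.1, Matrix.one_mul]
  refine (sq_le_sq₀ (mul_nonneg (singularValue_nonneg M r) (frobNorm_nonneg B))
    (frobNorm_nonneg _)).1 ?_
  rw [frobNorm_sq_eq_trace (M * V * B), hgram, trace_transpose_mul_eq_sum, mul_pow, frobNorm_sq,
    Finset.mul_sum]
  refine Finset.sum_le_sum fun j _ => ?_
  rw [Finset.mul_sum]
  refine Finset.sum_le_sum fun k _ => ?_
  have hσ : singularValue M r ≤ singularValue M (j + 1) :=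
    singularValue_anti M (Nat.succ_ne_zero _) j.2
  calc singularValue M r ^ 2 * B j k ^ 2 ≤ singularValue M (j + 1) ^ 2 * B j k ^ 2 := by
        gcongr; exact singularValue_nonneg M r
    _ = _ := by rw [diagonal_mul]; ring

lemma linearIndependent_col (hV : IsRightSingularVectors M V) : LinearIndependent ℝ V.col := by
  refine mulVec_injective_iff.1 (Function.LeftInverse.injective (g := Vᵀ.mulVec) fun x => ?_)
  rw [mulVec_mulVec, hV.1, one_mulVec]

-- The first `rank M` columns have nonzero eigenvalues, so they already span the range of `MᵀM`.
lemma range_transpose_mul_self_le (hV : IsRightSingularVectors M V) (hM : M.rank ≤ r) :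
    LinearMap.range (Mᵀ * M).mulVecLin ≤ LinearMap.range V.mulVecLin := by
  have hcol (j : Fin M.rank) :
      V.col (Fin.castLE hM j) ∈ LinearMap.range (Mᵀ * M).mulVecLin := by
    have hpos : 0 < singularValue M (j + 1) := singularValue_pos M (Nat.succ_ne_zero _) j.2
    refine ⟨(singularValue M (j + 1) ^ 2)⁻¹ • V.col (Fin.castLE hM j), ?_⟩
    rw [map_smul, mulVecLin_apply, inv_smul_eq_iff₀ (by positivity)]
    exact hV.2 (Fin.castLE hM j)
  have hspan : Submodule.span ℝ (Set.range (V.col ∘ Fin.castLE hM))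
      = LinearMap.range (Mᵀ * M).mulVecLin := by
    refine Submodule.eq_of_le_of_finrank_eq (Submodule.span_le.2 ?_) ?_
    · rintro _ ⟨j, rfl⟩
      exact hcol j
    · rw [finrank_span_eq_card (hV.linearIndependent_col.comp _ (Fin.castLE_injective hM)),
        Fintype.card_fin]
      exact (rank_transpose_mul_self M).symm
  rw [← hspan, range_mulVecLin]
  exact Submodule.span_mono (Set.range_comp_subset_range (Fin.castLE hM) V.col)

lemma mul_mul_transpose (hV : IsRightSingularVectors M V) (hM : M.rank ≤ r) :
    M * V * Vᵀ = M := by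
  classical
  have hfix : V * Vᵀ * (Mᵀ * M) = Mᵀ * M := by
    refine ext_of_mulVec_single fun i => ?_
    obtain ⟨y, hy⟩ := hV.range_transpose_mul_self_le hM ⟨Pi.single i 1, rfl⟩
    simp only [mulVecLin_apply] at hy
    rw [← mulVec_mulVec, ← hy, ← mulVec_mulVec, mulVec_mulVec _ Vᵀ, hV.1, one_mulVec]
  have hzero : Mᵀ * M * (1 - V * Vᵀ) = 0 := by
    have := congrArg transpose hfix
    simp only [transpose_mul, transpose_transpose] at this
    rw [Matrix.mul_sub, Matrix.mul_one, this, sub_self]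
  rw [← conjTranspose_eq_transpose_of_trivial, conjTranspose_mul_self_mul_eq_zero,
    Matrix.mul_sub, Matrix.mul_one, sub_eq_zero, ← Matrix.mul_assoc] at hzero
  exact hzero.symm

end IsRightSingularVectors

lemma IsLeftSingularVectors.mul_transpose_mul {I J : Type*} [Fintype I] [Fintype J] {r : ℕ}
    {M : Matrix I J ℝ} {U : Matrix I (Fin r) ℝ} (hU : IsLeftSingularVectors M U)
    (hM : M.rank ≤ r) : U * Uᵀ * M = M := by
  have h := congrArg transpose
    (IsRightSingularVectors.mul_mul_transpose hU (M.rank_transpose.trans_le hM))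
  simpa only [transpose_mul, transpose_transpose, Matrix.mul_assoc] using h

lemma mul_frobNorm_projection_sub_le {I J : Type*} [Fintype I] [Fintype J] {r : ℕ}
    {M Z : Matrix I J ℝ} {U U₁ : Matrix I (Fin r) ℝ} {V V₁ : Matrix J (Fin r) ℝ} (hM : M.rank ≤ r)
    (hU : IsLeftSingularVectors M U) (hV : IsRightSingularVectors M V) (hU₁ : U₁ᵀ * U₁ = 1)
    (hV₁ : IsRightSingularVectors (U₁ * U₁ᵀ * (M + Z)) V₁)
    (hUU₁ : frobNorm (U₁ * U₁ᵀ - U * Uᵀ) ≤ 1) :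
    (1 - frobNorm (U₁ * U₁ᵀ - U * Uᵀ)) * singularValue M r * frobNorm (V₁ * V₁ᵀ - V * Vᵀ)
      ≤ √2 * frobNorm (U₁ᵀ * Z) := by
  classical
  set c := frobNorm (U₁ * U₁ᵀ - U * Uᵀ)
  set Q := 1 - V₁ * V₁ᵀ with hQ
  have hrank : (U₁ * U₁ᵀ * (M + Z)).rank ≤ r := by
    rw [Matrix.mul_assoc]
    simpa only [Fintype.card_fin] using (rank_mul_le_left _ _).trans U₁.rank_le_card_width
  have hkill : U₁ * U₁ᵀ * (M * Q) = -(U₁ * (U₁ᵀ * Z * Q)) := by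
    have hzero : U₁ * U₁ᵀ * (M + Z) * Q = 0 := by
      rw [hQ, Matrix.mul_sub, Matrix.mul_one, ← Matrix.mul_assoc _ V₁, hV₁.mul_mul_transpose hrank,
        sub_self]
    rw [← sub_eq_zero, sub_neg_eq_add, ← hzero]
    simp only [Matrix.mul_add, Matrix.add_mul, Matrix.mul_assoc]
  have hsignal : singularValue M r * frobNorm (Vᵀ * Q) ≤ frobNorm (M * Q) := by
    simpa only [← Matrix.mul_assoc, hV.mul_mul_transpose hM] using
      hV.singularValue_mul_frobNorm_le (Vᵀ * Q)
  have hnoise : (1 - c) * frobNorm (M * Q) ≤ frobNorm (U₁ᵀ * Z) :=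
    calc (1 - c) * frobNorm (M * Q) ≤ frobNorm (U₁ * U₁ᵀ * (M * Q)) :=
          one_sub_mul_frobNorm_le (by rw [← Matrix.mul_assoc, hU.mul_transpose_mul hM])
      _ = frobNorm (U₁ᵀ * Z * Q) := by
          rw [hkill, frobNorm_neg, frobNorm_mul_of_transpose_mul_self hU₁]
      _ ≤ frobNorm (U₁ᵀ * Z) := frobNorm_mul_one_sub_le hV₁.1 _
  have hsin : frobNorm (V₁ * V₁ᵀ - V * Vᵀ) = √2 * frobNorm (Vᵀ * Q) := by
    rw [← Real.sqrt_sq (frobNorm_nonneg (V₁ * V₁ᵀ - V * Vᵀ)), frobNorm_projection_sub_sq hV.1 hV₁.1,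
      Real.sqrt_mul zero_le_two, Real.sqrt_sq (frobNorm_nonneg _)]
  calc (1 - c) * singularValue M r * frobNorm (V₁ * V₁ᵀ - V * Vᵀ)
      = √2 * ((1 - c) * (singularValue M r * frobNorm (Vᵀ * Q))) := by rw [hsin]; ring
    _ ≤ √2 * ((1 - c) * frobNorm (M * Q)) := by gcongr
    _ ≤ √2 * frobNorm (U₁ᵀ * Z) := by gcongr

instance matrixBorelSpace {n m : ℕ} : BorelSpace (Matrix (Fin n) (Fin m) ℝ) :=
  inferInstanceAs (BorelSpace (Fin n → Fin m → ℝ))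

instance isProbabilityMeasure_gaussianMatrix (n m : ℕ) (v : ℝ≥0) :
    IsProbabilityMeasure (gaussianMatrix n m v) :=
  inferInstanceAs (IsProbabilityMeasure
    (Measure.pi fun _ : Fin n => Measure.pi fun _ : Fin m => gaussianReal 0 v))

lemma integral_prod_gaussianMatrix {𝕜 : Type*} [RCLike 𝕜] {n m : ℕ} (v : ℝ≥0)
    (f : Fin n → Fin m → ℝ → 𝕜) :
    ∫ z, ∏ i, ∏ j, f i j (z i j) ∂gaussianMatrix n m v
      = ∏ i, ∏ j, ∫ x, f i j x ∂gaussianReal 0 v := by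
  refine (integral_fintype_prod_eq_prod
    (fun i (row : Fin m → ℝ) => ∏ j, f i j (row j))).trans ?_
  exact Finset.prod_congr rfl fun i _ => integral_fintype_prod_eq_prod (f i)

lemma ext_of_integral_exp_trace {n m : ℕ} {μ ν : Measure (Matrix (Fin n) (Fin m) ℝ)}
    [IsFiniteMeasure μ] [IsFiniteMeasure ν]
    (h : ∀ T : Matrix (Fin n) (Fin m) ℝ, ∫ z, Complex.exp ((Tᵀ * z).trace * Complex.I) ∂μ
      = ∫ z, Complex.exp ((Tᵀ * z).trace * Complex.I) ∂ν) :
    μ = ν := by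
  have hμ : IsFiniteMeasure (α := Fin n → Fin m → ℝ) μ := ‹_›
  have hν : IsFiniteMeasure (α := Fin n → Fin m → ℝ) ν := ‹_›
  refine Measure.ext_of_charFunDual (E := Fin n → Fin m → ℝ) (funext fun L => ?_)
  obtain ⟨T, hT⟩ : ∃ T : Matrix (Fin n) (Fin m) ℝ, ∀ z, L z = (Tᵀ * of z).trace := by
    refine ⟨of fun i j => L (Pi.single i (Pi.single j 1)), fun z => ?_⟩
    have hz : z = ∑ i, ∑ j, z i j • Pi.single i (Pi.single j 1) := by
      ext i j
      simp [Finset.sum_apply, Pi.single_apply, apply_ite, ite_apply]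
    nth_rewrite 1 [hz]
    simp only [map_sum, map_smul, trace_transpose_mul_eq_sum, of_apply, smul_eq_mul, mul_comm]
  change ∫ z : Fin n → Fin m → ℝ, Complex.exp (L z * Complex.I) ∂μ
    = ∫ z : Fin n → Fin m → ℝ, Complex.exp (L z * Complex.I) ∂ν
  simp only [hT]
  exact h T

lemma integral_exp_trace_gaussianMatrix {n m : ℕ} (v : ℝ≥0) (T : Matrix (Fin n) (Fin m) ℝ) :
    ∫ z, Complex.exp ((Tᵀ * z).trace * Complex.I) ∂gaussianMatrix n m v
      = Complex.exp (-(v * frobNorm T ^ 2 / 2 : ℝ)) := by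
  have hchar (t : ℝ) : ∫ x, Complex.exp ((t * x : ℝ) * Complex.I) ∂gaussianReal 0 v
      = Complex.exp (-(v * t ^ 2 / 2 : ℝ)) := by
    simpa [charFun_apply_real] using charFun_gaussianReal (μ := 0) (v := v) t
  simp only [trace_transpose_mul_eq_sum, Complex.ofReal_sum, Finset.sum_mul, Complex.exp_sum]
  rw [integral_prod_gaussianMatrix v (fun i j x => Complex.exp ((T i j * x : ℝ) * Complex.I))]
  simp only [hchar, ← Complex.exp_sum, frobNorm_sq, Finset.mul_sum, Finset.sum_div,
    Complex.ofReal_sum, Finset.sum_neg_distrib]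

lemma measurable_const_mul_matrix {n m r : ℕ} (W : Matrix (Fin r) (Fin n) ℝ) :
    Measurable fun z : Matrix (Fin n) (Fin m) ℝ => W * z :=
  (continuous_const.matrix_mul continuous_id).measurable

lemma map_transpose_mul_gaussianMatrix {n m r : ℕ} (v : ℝ≥0) {U : Matrix (Fin n) (Fin r) ℝ}
    (hU : Uᵀ * U = 1) :
    (gaussianMatrix n m v).map (fun z => Uᵀ * z) = gaussianMatrix r m v := by
  have hmeas := measurable_const_mul_matrix (m := m) Uᵀ
  have := Measure.isProbabilityMeasure_map (μ := gaussianMatrix n m v) hmeas.aemeasurable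
  refine ext_of_integral_exp_trace fun T => ?_
  rw [integral_map hmeas.aemeasurable (Continuous.aestronglyMeasurable (by fun_prop))]
  simp only [← Matrix.mul_assoc, ← transpose_mul, integral_exp_trace_gaussianMatrix,
    frobNorm_mul_of_transpose_mul_self hU]

-- For `1 ≤ 2 * v * s` the integral diverges and both sides are the junk value `0`.
lemma mgf_sq_gaussianReal {v : ℝ≥0} (hv : v ≠ 0) (s : ℝ) :
    mgf (fun x => x ^ 2) (gaussianReal 0 v) s = (√(1 - 2 * v * s))⁻¹ := by
  have : (0 : ℝ) < v := by positivity
  have hdens (x : ℝ) : gaussianPDFReal 0 v x * Real.exp (s * x ^ 2)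
      = (√(2 * Real.pi * v))⁻¹ * Real.exp (-((2 * (v : ℝ))⁻¹ - s) * x ^ 2) := by
    rw [gaussianPDFReal, mul_assoc, ← Real.exp_add]
    congr 2
    field_simp
    ring
  simp only [mgf, integral_gaussianReal_eq_integral_smul hv, smul_eq_mul, hdens,
    integral_const_mul, integral_gaussian]
  rw [← Real.sqrt_inv, ← Real.sqrt_inv, ← Real.sqrt_mul (by positivity)]
  congr 1
  field_simp

lemma mgf_frobNorm_sq_gaussianMatrix (n m : ℕ) (v : ℝ≥0) (s : ℝ) :
    mgf (fun z => frobNorm z ^ 2) (gaussianMatrix n m v) s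
      = mgf (fun x => x ^ 2) (gaussianReal 0 v) s ^ (n * m) := by
  simp only [mgf, frobNorm_sq, Finset.mul_sum, Real.exp_sum]
  rw [integral_prod_gaussianMatrix v (fun _ _ x => Real.exp (s * x ^ 2))]
  simp [← pow_mul, mul_comm]

lemma measurable_frobNorm (n m : ℕ) : Measurable (frobNorm : Matrix (Fin n) (Fin m) ℝ → ℝ) := by
  have : Continuous (frobNorm : Matrix (Fin n) (Fin m) ℝ → ℝ) := by
    unfold frobNorm; fun_prop
  exact this.measurable

lemma measureReal_le_frobNorm_sq_gaussianMatrix_le_exp (n m : ℕ) {v : ℝ≥0} (hv : v ≠ 0) (t : ℝ) :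
    (gaussianMatrix n m v).real {z | v * (2 * (n * m) + 4 * t) ≤ frobNorm z ^ 2}
      ≤ Real.exp (-t) := by
  have : (0 : ℝ) < v := by positivity
  have hmgf : mgf (fun z => frobNorm z ^ 2) (gaussianMatrix n m v) (4 * (v : ℝ))⁻¹
      = √2 ^ (n * m) := by
    rw [mgf_frobNorm_sq_gaussianMatrix, mgf_sq_gaussianReal hv, ← Real.sqrt_inv]
    congr 2
    field_simp
    norm_num
  have hint : Integrable (fun z => Real.exp ((4 * (v : ℝ))⁻¹ * frobNorm z ^ 2))
      (gaussianMatrix n m v) :=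
    .of_integral_ne_zero (hmgf.trans_ne (by positivity))
  have hsqrt : √2 ≤ Real.exp (1 / 2) := by
    rw [Real.exp_half]
    exact Real.sqrt_le_sqrt (by linarith [Real.add_one_le_exp 1])
  set a : ℝ := v * (2 * (n * m) + 4 * t) with ha
  calc _ ≤ Real.exp (-(4 * (v : ℝ))⁻¹ * a) * √2 ^ (n * m) :=
        hmgf ▸ measure_ge_le_exp_mul_mgf a (by positivity) hint
    _ ≤ Real.exp (-(4 * (v : ℝ))⁻¹ * a) * Real.exp (1 / 2) ^ (n * m) := by gcongr
    _ = Real.exp (-t) := by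
        rw [← Real.exp_nat_mul, ← Real.exp_add, ha]
        congr 1
        push_cast
        field_simp
        ring

lemma one_sub_exp_le_measureReal_frobNorm_sq_transpose_mul {n m r : ℕ} {v : ℝ≥0} (hv : v ≠ 0)
    {U : Matrix (Fin n) (Fin r) ℝ} (hU : Uᵀ * U = 1) (t : ℝ) :
    1 - Real.exp (-t) ≤ (gaussianMatrix n m v).real
      {z | frobNorm (Uᵀ * z) ^ 2 ≤ v * (2 * (r * m) + 4 * t)} := by
  set S : Set (Matrix (Fin r) (Fin m) ℝ) := {w | frobNorm w ^ 2 ≤ v * (2 * (r * m) + 4 * t)}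
  have hS : MeasurableSet S := measurableSet_le ((measurable_frobNorm r m).pow_const 2)
    measurable_const
  change _ ≤ (gaussianMatrix n m v).real ((fun z => Uᵀ * z) ⁻¹' S)
  rw [← map_measureReal_apply (measurable_const_mul_matrix Uᵀ) hS,
    map_transpose_mul_gaussianMatrix v hU]
  have hcompl : Sᶜ ⊆ {w | v * (2 * (r * m) + 4 * t) ≤ frobNorm w ^ 2} := by
    simp only [S, compl_ofPred, not_le, ofPred_subset_ofPred]
    exact fun w hw => hw.le
  linarith [probReal_compl_eq_one_sub (μ := gaussianMatrix r m v) hS,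
    measureReal_mono (μ := gaussianMatrix r m v) hcompl,
    measureReal_le_frobNorm_sq_gaussianMatrix_le_exp r m hv t]

lemma sqrt_two_mul_le_of_sq_le {x σ a b : ℝ} (hσ : 0 ≤ σ) (ha : 0 ≤ a) (hb : 0 ≤ b)
    (hx : x ^ 2 ≤ σ ^ 2 * (2 * a + 4 * b)) : √2 * x ≤ 2 * σ * (√a + √(2 * b)) := by
  have hsq : a + 2 * b ≤ (√a + √(2 * b)) ^ 2 := by
    rw [add_sq, Real.sq_sqrt ha, Real.sq_sqrt (by positivity)]
    linarith [mul_nonneg (Real.sqrt_nonneg a) (Real.sqrt_nonneg (2 * b))]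
  refine le_of_abs_le (abs_le_of_sq_le_sq ?_ (by positivity))
  calc (√2 * x) ^ 2 = 2 * x ^ 2 := by rw [mul_pow, Real.sq_sqrt zero_le_two]
    _ ≤ 4 * σ ^ 2 * (a + 2 * b) := by linarith
    _ ≤ 4 * σ ^ 2 * (√a + √(2 * b)) ^ 2 := by gcongr
    _ = (2 * σ * (√a + √(2 * b))) ^ 2 := by ring

theorem stmt8_general {n m r : ℕ} {c δ σ p : ℝ} {M : Matrix (Fin n) (Fin m) ℝ}
    {U U1 : Matrix (Fin n) (Fin r) ℝ} {V : Matrix (Fin m) (Fin r) ℝ}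
    {V1 : Matrix (Fin n) (Fin m) ℝ → Matrix (Fin m) (Fin r) ℝ}
    (hM : M.rank ≤ r) (hδ : 0 < δ) (hδM : δ ≤ singularValue M r)
    (hU : IsLeftSingularVectors M U) (hV : IsRightSingularVectors M V) (hU1 : U1ᵀ * U1 = 1)
    (hc : c < 1) (hUU1 : frobNorm (U1 * U1ᵀ - U * Uᵀ) ≤ c) (hσ : 0 < σ) (hp : 1 ≤ p)
    (hV1 : ∀ z, IsRightSingularVectors (U1 * U1ᵀ * (M + z)) (V1 z)) :
    ENNReal.ofReal (1 - 1 / p) ≤ gaussianMatrix n m (Real.toNNReal (σ ^ 2))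
      {z | frobNorm (V1 z * (V1 z)ᵀ - V * Vᵀ) ≤
        2 * σ * (√(m * r) + √(2 * Real.log p)) / ((1 - c) * δ)} := by
  have hprob := one_sub_exp_le_measureReal_frobNorm_sq_transpose_mul (m := m)
    (v := Real.toNNReal (σ ^ 2)) (by positivity) hU1 (Real.log p)
  rw [Real.exp_neg, Real.exp_log (by positivity), Real.coe_toNNReal _ (sq_nonneg σ),
    ← one_div] at hprob
  refine ENNReal.ofReal_le_of_le_toReal (hprob.trans (measureReal_mono fun z hz => ?_))
  have : 0 < 1 - c := sub_pos.2 hc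
  rw [mem_ofPred_eq, le_div_iff₀' (by positivity)]
  calc (1 - c) * δ * frobNorm (V1 z * (V1 z)ᵀ - V * Vᵀ)
      ≤ (1 - frobNorm (U1 * U1ᵀ - U * Uᵀ)) * singularValue M r
          * frobNorm (V1 z * (V1 z)ᵀ - V * Vᵀ) := by
        gcongr
        · exact frobNorm_nonneg _
        · exact sub_nonneg.2 (hUU1.trans hc.le)
    _ ≤ √2 * frobNorm (U1ᵀ * z) :=
        mul_frobNorm_projection_sub_le hM hU hV hU1 (hV1 z) (hUU1.trans hc.le)
    _ ≤ 2 * σ * (√(m * r) + √(2 * Real.log p)) :=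
        sqrt_two_mul_le_of_sq_le hσ.le (by positivity) (Real.log_nonneg hp)
          (by rw [mul_comm (m : ℝ)]; exact hz)

/-- Accuracy of V_{(1)}. There is a sufficiently small absolute constant c₁' > 0
such that for all values a = κ₋(s_*), b = κ₊(s_*) and γ there is a constant C > 0 depending only
on these (and c₁') such that: if ‖U_{(1)}U_{(1)}' − UU'‖_F < c₁', where U_{(1)} is deterministic
(hence independent of Y_{(2)} = XA + Z_{(2)}, Z_{(2)} with i.i.d. N(0,(2σ)²) entries), and
V_{(1)} collects the top-r right singular vectors of U_{(1)}U_{(1)}'Y_{(2)}, then with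
probability at least 1 − 1/p, ‖V_{(1)}V_{(1)}' − VV'‖_F ≤ C σ (√(mr) + √(2 log p))/d. -/
theorem stmt8 :
    ∃ c1' : ℝ, 0 < c1' ∧
    ∀ a b γ : ℝ, 0 < a → 1 ≤ γ →
    ∃ C : ℝ, 0 < C ∧
    ∀ (n m p s r sstar : ℕ) (d σ K : ℝ)
      (X : Matrix (Fin n) (Fin p) ℝ) (A : Matrix (Fin p) (Fin m) ℝ)
      (U U1 : Matrix (Fin n) (Fin r) ℝ) (V : Matrix (Fin m) (Fin r) ℝ)
      (V1 : Matrix (Fin n) (Fin m) ℝ → Matrix (Fin m) (Fin r) ℝ),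
      1 ≤ r → r ≤ s →
      memTheta A s r d γ →
      0 < σ →
      1 < K → K⁻¹ ≤ kappaMinus X sstar → kappaMinus X sstar ≤ kappaPlus X sstar →
      kappaPlus X sstar ≤ K →
      kappaMinus X sstar = a → kappaPlus X sstar = b →
      IsLeftSingularVectors (X * A) U →
      IsRightSingularVectors (X * A) V →
      U1ᵀ * U1 = 1 →
      frobNorm (U1 * U1ᵀ - U * Uᵀ) < c1' →
      kappaMinus X sstar * d ≤ singularValue (X * A) r →
      singularValue (X * A) 1 ≤ kappaPlus X sstar * γ * d →
      (∀ z2 : Matrix (Fin n) (Fin m) ℝ,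
        IsRightSingularVectors (U1 * U1ᵀ * (X * A + z2)) (V1 z2)) →
      ENNReal.ofReal (1 - 1 / (p : ℝ)) ≤
        gaussianMatrix n m (Real.toNNReal ((2 * σ) ^ 2))
          {z | frobNorm (V1 z * (V1 z)ᵀ - V * Vᵀ) ≤
            C * σ * (Real.sqrt ((m : ℝ) * r) + Real.sqrt (2 * Real.log p)) / d} := by
  refine ⟨1 / 2, by norm_num, fun a _ _ ha _ => ⟨8 / a, by positivity, ?_⟩⟩
  rintro n m p s r sstar d σ K X A U U1 V V1 hr - ⟨hA, hd, -⟩ hσ - - - - rfl - hU hV hU1 hUU1 hδ -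
    hV1
  have hrank : (X * A).rank ≤ r := hA ▸ rank_mul_le_right X A
  have hp : 1 ≤ p := hr.trans (hA ▸ A.rank_le_height)
  convert stmt8_general hrank (mul_pos ha hd) hδ hU hV hU1 one_half_lt_one hUU1.le
    (mul_pos two_pos hσ) (Nat.one_le_cast.2 hp) hV1 using 5
  field_simp
  norm_num

end
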